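/- Let S₀ be the set of ordered pairs (T, T′) with T, T′ ∈ T_{AB} and ⟨T, T′⟩ = 0. Then |S₀| = 891·42, the map s₀: (T,T′) ↦ pr(T′ − T) (orthogonal projection to R_{AB}^⊥ ⊗ Q) is injective, and the image of s₀ spans R_{AB}^⊥ ⊗ Q. -/

import Mathlib

open scoped BigOperators

/-- A generator matrix of the extended binary Golay code (MOG coordinates). -/
def golayMatrix : Matrix (Fin 12) (Fin 24) (ZMod 2) :=
  !![0, 0, 0, 0, 0, 0, 0, 0, 0, 0, 0, 0, 0, 0, 0, 0, 1, 1, 1, 1, 1, 1, 1, 1;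
    0, 0, 0, 0, 0, 0, 0, 0, 0, 0, 0, 0, 1, 1, 1, 1, 0, 0, 0, 0, 1, 1, 1, 1;
    0, 0, 0, 0, 0, 0, 0, 0, 0, 0, 1, 1, 0, 0, 1, 1, 0, 0, 1, 1, 0, 0, 1, 1;
    0, 0, 0, 0, 0, 0, 0, 0, 0, 1, 0, 1, 0, 1, 0, 1, 0, 1, 0, 1, 0, 1, 0, 1;
    0, 0, 0, 0, 0, 0, 0, 0, 1, 0, 0, 1, 0, 1, 1, 0, 0, 1, 1, 0, 1, 0, 0, 1;
    0, 0, 0, 0, 0, 0, 1, 1, 0, 0, 0, 0, 0, 0, 1, 1, 0, 1, 1, 0, 0, 1, 0, 1;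
    0, 0, 0, 0, 0, 1, 0, 1, 0, 0, 0, 0, 0, 1, 0, 1, 0, 0, 1, 1, 0, 1, 1, 0;
    0, 0, 0, 0, 1, 0, 0, 1, 0, 0, 0, 0, 0, 1, 1, 0, 0, 1, 0, 1, 1, 1, 0, 0;
    0, 0, 0, 1, 0, 0, 0, 1, 0, 0, 0, 1, 0, 0, 0, 1, 0, 1, 1, 1, 1, 0, 0, 0;
    0, 0, 1, 0, 0, 0, 0, 1, 0, 0, 0, 1, 0, 0, 1, 0, 0, 0, 1, 0, 1, 1, 1, 0;
    0, 1, 0, 0, 0, 0, 0, 1, 0, 0, 0, 1, 0, 1, 0, 0, 0, 0, 0, 1, 1, 0, 1, 1;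
    1, 0, 0, 0, 0, 0, 0, 1, 0, 0, 0, 1, 0, 1, 1, 1, 0, 1, 0, 0, 0, 0, 1, 0]

/-- The extended binary Golay code `C₂₄`. -/
def GolayCode : Submodule (ZMod 2) (Fin 24 → ZMod 2) :=
  Submodule.span (ZMod 2) (Set.range fun i => golayMatrix i)

/-- Membership in the Leech lattice `Λ₂₄ ⊂ ℤ²⁴` (coordinates scaled by `√8`),
via the standard congruence characterization. -/
def IsLeech (x : Fin 24 → ℤ) : Prop :=
  ∃ m : ℤ, (m = 0 ∨ m = 1) ∧ (∀ i, (2:ℤ) ∣ (x i - m)) ∧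
    ((fun i => if (4:ℤ) ∣ (x i - m - 2) then (1 : ZMod 2) else 0) ∈ GolayCode) ∧
    (8:ℤ) ∣ ((∑ i, x i) - 4 * m)

/-- The inner product `⟨x, y⟩ = (Σ xᵢ yᵢ)/8` on the Leech lattice. -/
def leechInner (x y : Fin 24 → ℤ) : ℚ := (∑ i, (x i : ℚ) * (y i : ℚ)) / 8

/-- The lattice point `A = (0²¹, 4, 0, −4)`. -/
def vA : Fin 24 → ℤ := fun i => if i.val = 21 then 4 else if i.val = 23 then -4 else 0

/-- The lattice point `B = (0²¹, 0, 4, −4)`. -/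
def vB : Fin 24 → ℤ := fun i => if i.val = 22 then 4 else if i.val = 23 then -4 else 0

/-- `T_AB`: lattice points `T` with `|OT| = |AT| = |BT| = 2`. -/
def TAB : Set (Fin 24 → ℤ) :=
  {T | IsLeech T ∧ leechInner T T = 4 ∧
       leechInner (T - vA) (T - vA) = 4 ∧ leechInner (T - vB) (T - vB) = 4}

/-- The inner product `(Σ xᵢyᵢ)/8` on `ℚ²⁴`. -/
def ratInner (x y : Fin 24 → ℚ) : ℚ := (∑ i, x i * y i) / 8

/-- Integer vectors regarded as rational vectors. -/
def toRat (x : Fin 24 → ℤ) : Fin 24 → ℚ := fun i => (x i : ℚ)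

/-- Orthogonal projection of `ℚ²⁴` onto the orthogonal complement of
`span{A, B}` (Gram matrix `[[4,2],[2,4]]`). -/
def prPerp (v : Fin 24 → ℚ) : Fin 24 → ℚ :=
  v - ((4 * ratInner v (toRat vA) - 2 * ratInner v (toRat vB)) / 12) • toRat vA
    - ((-2 * ratInner v (toRat vA) + 4 * ratInner v (toRat vB)) / 12) • toRat vB

/-- The set `S₀` of ordered pairs `(T, T′)` in `T_AB` with `⟨T, T′⟩ = 0`. -/
def S0 : Set ((Fin 24 → ℤ) × (Fin 24 → ℤ)) :=
  {p | p.1 ∈ TAB ∧ p.2 ∈ TAB ∧ leechInner p.1 p.2 = 0}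

/-- The map `s₀ : (T, T′) ↦ pr(T′ − T)`. -/
def s0map (p : (Fin 24 → ℤ) × (Fin 24 → ℤ)) : Fin 24 → ℚ :=
  prPerp (toRat (p.2 - p.1))


/-! ### Enumeration: codewords as bit masks (bit `23 - i` is coordinate `i`) and points of `T_AB`
as lists of naturals (coordinates shifted by `4`). -/

def gRows : List ℕ := [8460098, 4264987, 2167342, 1118584, 591452, 329014, 197477, 38505, 21845, 13107, 3855, 255]

def gen : List ℕ → List ℕ
  | [] => [0]
  | r :: rs => gen rs ++ (gen rs).map (fun c => Nat.xor r c)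

def codes : List ℕ := gen gRows

def tb (c i : ℕ) : Bool := Nat.beq (Nat.land (Nat.shiftRight c i) 1) 1

def bitsAux (c : ℕ) : ℕ → List Bool
  | 0 => []
  | n + 1 => tb c n :: bitsAux c n

/-- The coordinates of the codeword `c`, as a list. -/
def bits (c : ℕ) : List Bool := bitsAux c 24

def wtL : List Bool → ℕ
  | [] => 0
  | b :: bs => Nat.add (bif b then 1 else 0) (wtL bs)

def choices : List Bool → List (List ℕ)
  | [] => [[]]
  | true :: bs => (choices bs).map (fun l => 6 :: l) ++ (choices bs).map (fun l => 2 :: l)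
  | false :: bs => (choices bs).map (fun l => 4 :: l)

def lsum : List ℕ → ℕ
  | [] => 0
  | x :: xs => Nat.add x (lsum xs)

def Lodd : List (ℕ × List ℕ) :=
  (codes.filter fun c => !(tb c 2 || tb c 1 || tb c 0)).map fun c =>
    (c, ((bits c).take 21).map (fun b => bif b then 3 else 5) ++ [5, 5, 1])

def Loct : List (ℕ × List ℕ) :=
  ((codes.filter fun c => tb c 2 && tb c 1 && tb c 0).filter
    fun c => Nat.beq (wtL (bits c)) 8).flatMap fun c =>
    ((choices ((bits c).take 21)).filter fun l => Nat.beq (Nat.mod (lsum l) 8) 2).map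
      fun l => (c, l ++ [6, 6, 2])

def L4 : List (ℕ × List ℕ) :=
  (List.range 21).flatMap fun i => [8, 0].map fun s =>
    (0, (List.range 21).map (fun j => bif Nat.beq (Nat.add j i) 20 then s else 4) ++ [4, 4, 0])

def L0 : List (ℕ × List ℕ) := [(0, List.replicate 21 4 ++ [8, 8, 4])]

def LL : List (ℕ × List ℕ) := L0 ++ (Loct ++ (Lodd ++ L4))

def sqsum : List ℕ → ℕ
  | [] => 0
  | x :: xs => Nat.add (Nat.mul x x) (sqsum xs)

/-- congruence conditions of the Leech lattice for a shifted vector and its codeword -/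
def congr2 (m : ℕ) : List Bool → List ℕ → Bool
  | [], [] => true
  | b :: bs, x :: xs => Nat.beq (Nat.mod x 2) m && (Nat.beq (Nat.mod x 4) (Nat.add m 2) == b)
      && congr2 m bs xs
  | _, _ => false

def good (p : ℕ × List ℕ) : Bool :=
  Nat.beq (Nat.add (sqsum p.2) 352) (Nat.mul 8 (lsum p.2)) && Nat.beq (p.2.getD 21 0) (Nat.add (p.2.getD 23 0) 4) &&
    Nat.beq (p.2.getD 22 0) (Nat.add (p.2.getD 23 0) 4) &&
    ((congr2 0 (bits p.1) p.2 && Nat.beq (Nat.mod (lsum p.2) 8) 0) ||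
     (congr2 1 (bits p.1) p.2 && Nat.beq (Nat.mod (lsum p.2) 8) 4))

/-- a key by which the enumeration is strictly sorted -/
def skey (l : List ℕ) : ℕ :=
  l.foldl (fun n x => Nat.add (Nat.mul 2 n) (bif Nat.blt x 4 then 1 else 0))
    (l.foldl (fun n x => Nat.add (Nat.mul 2 n) (bif Nat.beq x 4 then 0 else 1))
      (Nat.sub 4 (l.getD 23 0)))

def sortedB : List ℕ → Bool
  | [] => true
  | a :: t => (match t with
    | [] => true
    | b :: _ => Nat.blt a b) && sortedB t

def horner (B : ℕ) : List ℕ → ℕ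
  | [] => 0
  | x :: xs => Nat.add x (Nat.mul B (horner B xs))

/-- `∑ T_i` -/
def Sx (i : ℕ) : ℤ :=
  bif Nat.blt i 21 then 0 else bif Nat.beq i 23 then -2376 else 1188

/-- `∑ T_i T_j` -/
def Mx (i j : ℕ) : ℤ :=
  bif Nat.blt i 21 then (bif Nat.beq i j then 864 else 0)
  else bif Nat.blt j 21 then 0
  else bif Nat.beq i 23 then (bif Nat.beq j 23 then 6624 else -2880)
  else (bif Nat.beq j 23 then -2880 else 1872)

/-- moments of the shifted vectors, with an extra coordinate `1` in front -/
def Mh : ℕ → ℕ → ℕ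
  | 0, 0 => 891
  | 0, j + 1 => (Sx j + 3564).toNat
  | i + 1, 0 => (Sx i + 3564).toNat
  | i + 1, j + 1 => (Mx i j + 4 * Sx i + 4 * Sx j + 14256).toNat


set_option maxRecDepth 100000 in
theorem good_ok : LL.all good = true := by decide +kernel

set_option maxRecDepth 100000 in
theorem wt_ok : codes.all (fun c => Nat.beq c 0 || Nat.ble 8 (wtL (bits c))) = true := by
  decide +kernel

set_option maxRecDepth 100000 in
theorem sorted_ok : sortedB (LL.map fun p => skey p.2) = true := by decide +kernel

set_option maxRecDepth 100000 in
theorem moment_ok :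
    lsum (LL.map fun p => Nat.mul (horner 131072 (1 :: p.2)) (horner (131072 ^ 25) (1 :: p.2))) =
      horner (131072 ^ 25) ((List.range 25).map fun i => horner 131072 ((List.range 25).map (Mh i))) := by
  decide +kernel

set_option maxRecDepth 100000 in
theorem length_ok : LL.length = 891 := by decide +kernel

/-! ### The Golay code -/

def cvec (c : ℕ) : Fin 24 → ZMod 2 := fun i => if c.testBit (23 - i.val) then 1 else 0

theorem cvec_xor (a b : ℕ) : cvec (Nat.xor a b) = cvec a + cvec b := by
  funext i
  have h : (Nat.xor a b).testBit (23 - i.val) = ((a.testBit (23 - i.val)) ^^ (b.testBit (23 - i.val))) :=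
    Nat.testBit_xor ..
  simp only [cvec, Pi.add_apply, h]
  cases a.testBit (23 - i.val) <;> cases b.testBit (23 - i.val) <;> decide

theorem cvec_zero : cvec 0 = 0 := by
  funext i; simp [cvec]

theorem zero_mem_gen (rs : List ℕ) : 0 ∈ gen rs := by
  induction rs with
  | nil => simp [gen]
  | cons r rs ih => simp [gen, ih]

theorem xor_mem_gen (rs : List ℕ) : ∀ a ∈ gen rs, ∀ b ∈ gen rs, Nat.xor a b ∈ gen rs := by
  induction rs with
  | nil => simp [gen]
  | cons r rs ih =>
    intro a ha b hb
    simp only [gen, List.mem_append, List.mem_map] at ha hb ⊢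
    have X : ∀ u v : ℕ, Nat.xor u v = u ^^^ v := fun _ _ => rfl
    rcases ha with ha | ⟨a', ha, rfl⟩ <;> rcases hb with hb | ⟨b', hb, rfl⟩
    · exact Or.inl (ih a ha b hb)
    · refine Or.inr ⟨Nat.xor a b', ih a ha b' hb, ?_⟩
      simp only [X]; rw [← Nat.xor_assoc, ← Nat.xor_assoc, Nat.xor_comm r a]
    · refine Or.inr ⟨Nat.xor a' b, ih a' ha b hb, ?_⟩
      simp only [X]; rw [Nat.xor_assoc]
    · refine Or.inl ?_
      have := ih a' ha b' hb
      simp only [X] at this ⊢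
      have e : (r ^^^ a') ^^^ (r ^^^ b') = a' ^^^ b' := by
        rw [Nat.xor_comm r a', Nat.xor_assoc, ← Nat.xor_assoc r r b', Nat.xor_self, Nat.zero_xor]
      rwa [e]

theorem row_mem_gen (rs : List ℕ) : ∀ r ∈ rs, r ∈ gen rs := by
  induction rs with
  | nil => simp
  | cons r rs ih =>
    intro a ha
    simp only [gen, List.mem_append, List.mem_map]
    rcases List.mem_cons.1 ha with rfl | ha
    · exact Or.inr ⟨0, zero_mem_gen rs, Nat.xor_zero a⟩
    · exact Or.inl (ih a ha)

theorem gen_span (S : Submodule (ZMod 2) (Fin 24 → ZMod 2)) (rs : List ℕ)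
    (h : ∀ r ∈ rs, cvec r ∈ S) : ∀ c ∈ gen rs, cvec c ∈ S := by
  induction rs with
  | nil => intro c hc; simp only [gen, List.mem_singleton] at hc; subst hc; rw [cvec_zero]; exact S.zero_mem
  | cons r rs ih =>
    intro c hc
    have ih' := ih (fun r hr => h r (List.mem_cons_of_mem _ hr))
    simp only [gen, List.mem_append, List.mem_map] at hc
    rcases hc with hc | ⟨c', hc, rfl⟩
    · exact ih' c hc
    · rw [cvec_xor]; exact S.add_mem (h r List.mem_cons_self) (ih' c' hc)

theorem rows_beq : ∀ i : Fin 12, ∀ k : Fin 24,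
    (golayMatrix i k == cvec (gRows.getD (11 - i.val) 0) k) = true := by
  decide +kernel

theorem rows_eq (i : Fin 12) (k : Fin 24) :
    golayMatrix i k = cvec (gRows.getD (11 - i.val) 0) k := eq_of_beq (rows_beq i k)

theorem golay_iff (v : Fin 24 → ZMod 2) : v ∈ GolayCode ↔ ∃ c ∈ codes, v = cvec c := by
  constructor
  · intro hv
    refine Submodule.span_induction (p := fun v _ => ∃ c ∈ codes, v = cvec c) ?_ ?_ ?_ ?_ hv
    · rintro _ ⟨i, rfl⟩
      refine ⟨gRows.getD (11 - i.val) 0, row_mem_gen _ _ ?_, funext (rows_eq i)⟩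
      have : 11 - i.val < gRows.length := by simp only [gRows, List.length]; omega
      rw [List.getD_eq_getElem _ _ this]
      exact List.getElem_mem _
    · exact ⟨0, zero_mem_gen _, cvec_zero.symm⟩
    · rintro _ _ _ _ ⟨a, ha, rfl⟩ ⟨b, hb, rfl⟩
      exact ⟨Nat.xor a b, xor_mem_gen _ a ha b hb, (cvec_xor a b).symm⟩
    · rintro a _ _ ⟨b, hb, rfl⟩
      have : ∀ a : ZMod 2, a = 0 ∨ a = 1 := by decide
      rcases this a with rfl | rfl
      · exact ⟨0, zero_mem_gen _, by rw [cvec_zero, zero_smul]⟩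
      · exact ⟨b, hb, by rw [one_smul]⟩
  · rintro ⟨c, hc, rfl⟩
    refine gen_span _ gRows ?_ c hc
    have : ∀ r ∈ gRows, ∃ i : Fin 12, r = gRows.getD (11 - i.val) 0 := by decide +kernel
    intro r hr
    obtain ⟨i, rfl⟩ := this r hr
    rw [← funext (rows_eq i)]
    exact Submodule.subset_span ⟨i, rfl⟩

theorem tb_eq (c i : ℕ) : tb c i = c.testBit i := by
  have h2 : c >>> i &&& 1 = (c >>> i) % 2 := Nat.and_one_is_mod _
  have h1 : tb c i = Nat.beq (c >>> i &&& 1) 1 := rfl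
  rw [h1, h2, Nat.testBit_eq_decide_div_mod_eq, Nat.shiftRight_eq_div_pow]
  rw [Bool.eq_iff_iff]; simp [Nat.beq_eq]

theorem wt_aux (c n : ℕ) :
    wtL (bitsAux c n) = ∑ i ∈ Finset.range n, if c.testBit i then 1 else 0 := by
  induction n with
  | zero => rfl
  | succ n ih =>
    rw [Finset.sum_range_succ, ← ih, bitsAux, wtL, tb_eq, Bool.cond_eq_ite, Nat.add_eq, Nat.add_comm]

theorem wt_sum (c : ℕ) : (wtL (bits c) : ℤ) = ∑ i : Fin 24, if cvec c i = 1 then 1 else 0 := by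
  have h1 : ∀ i : Fin 24, (if cvec c i = 1 then (1 : ℤ) else 0) =
      (fun i : ℕ => if c.testBit (24 - 1 - i) then (1 : ℤ) else 0) i := by
    intro i
    by_cases h : c.testBit (23 - i.val) <;> simp [cvec, h]
  rw [Finset.sum_congr rfl (fun i _ => h1 i), Fin.sum_univ_eq_sum_range
    (fun i : ℕ => if c.testBit (24 - 1 - i) then (1 : ℤ) else 0),
    Finset.sum_range_reflect (fun i : ℕ => if c.testBit i then (1 : ℤ) else 0), bits, wt_aux]
  push_cast
  rfl

theorem golay_weight (v : Fin 24 → ZMod 2) (hv : v ∈ GolayCode) (h0 : v ≠ 0) :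
    8 ≤ ∑ i : Fin 24, if v i = 1 then (1 : ℤ) else 0 := by
  obtain ⟨c, hc, rfl⟩ := (golay_iff v).1 hv
  have := List.all_eq_true.1 wt_ok c hc
  rw [← wt_sum]
  rw [Bool.or_eq_true] at this
  rcases this with h | h
  · rw [Nat.eq_of_beq_eq_true h] at h0
    exact absurd cvec_zero h0
  · exact_mod_cast Nat.le_of_ble_eq_true h

theorem golay_orth_rows : ∀ i j : Fin 12, ∑ k : Fin 24, golayMatrix i k * golayMatrix j k = 0 := by
  decide +kernel

def orthS (w : Fin 24 → ZMod 2) : Submodule (ZMod 2) (Fin 24 → ZMod 2) where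
  carrier := {v | ∑ k, v k * w k = 0}
  zero_mem' := by simp
  add_mem' := by
    intro x y hx hy
    simp only [Set.mem_ofPred_eq, Pi.add_apply, add_mul, Finset.sum_add_distrib] at hx hy ⊢
    rw [hx, hy, add_zero]
  smul_mem' := by
    intro a x hx
    simp only [Set.mem_ofPred_eq, Pi.smul_apply, smul_eq_mul, mul_assoc, ← Finset.mul_sum] at hx ⊢
    rw [hx, mul_zero]

theorem mem_orthS (v w : Fin 24 → ZMod 2) : v ∈ orthS w ↔ ∑ k, v k * w k = 0 := Iff.rfl

theorem orthS_comm (v w : Fin 24 → ZMod 2) : v ∈ orthS w ↔ w ∈ orthS v := by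
  simp only [mem_orthS, mul_comm]

theorem golay_orth (v w : Fin 24 → ZMod 2) (hv : v ∈ GolayCode) (hw : w ∈ GolayCode) :
    ∑ k, v k * w k = 0 := by
  have h1 : ∀ i : Fin 12, GolayCode ≤ orthS (golayMatrix i) := by
    intro i
    refine Submodule.span_le.2 ?_
    rintro _ ⟨j, rfl⟩
    exact (mem_orthS _ _).2 (golay_orth_rows j i)
  have h2 : GolayCode ≤ orthS v := by
    refine Submodule.span_le.2 ?_
    rintro _ ⟨j, rfl⟩
    exact (orthS_comm _ _).1 (h1 j hv)
  exact (mem_orthS _ _).1 ((orthS_comm _ _).1 (h2 hw))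

theorem golay_one : (fun _ => 1 : Fin 24 → ZMod 2) ∈ GolayCode := by
  rw [golay_iff]
  exact ⟨16777215, by decide +kernel, by decide +kernel⟩

/-! ### The Leech lattice -/

def dotZ (x y : Fin 24 → ℤ) : ℤ := ∑ i, x i * y i

theorem dotZ_comm (x y : Fin 24 → ℤ) : dotZ x y = dotZ y x := by
  simp only [dotZ, mul_comm]

theorem dotZ_sub_left (x y z : Fin 24 → ℤ) : dotZ (x - y) z = dotZ x z - dotZ y z := by
  simp only [dotZ, Pi.sub_apply, sub_mul, Finset.sum_sub_distrib]

theorem dotZ_sub_right (x y z : Fin 24 → ℤ) : dotZ x (y - z) = dotZ x y - dotZ x z := by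
  simp only [dotZ, Pi.sub_apply, mul_sub, Finset.sum_sub_distrib]

theorem leechInner_eq (x y : Fin 24 → ℤ) : leechInner x y = (dotZ x y : ℚ) / 8 := by
  simp only [leechInner, dotZ]; push_cast; rfl

theorem isLeech_iff (x : Fin 24 → ℤ) : IsLeech x ↔ ∃ m : ℤ, ∃ c z : Fin 24 → ℤ,
    (∀ i, x i = m + 2 * c i + 4 * z i) ∧ (fun i => (c i : ZMod 2)) ∈ GolayCode ∧
    (8 : ℤ) ∣ (∑ i, x i) - 4 * m := by
  constructor
  · rintro ⟨m, _, h2, hc, h8⟩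
    refine ⟨m, fun i => if (4:ℤ) ∣ (x i - m - 2) then 1 else 0,
      fun i => (x i - m - 2 * (if (4:ℤ) ∣ (x i - m - 2) then 1 else 0)) / 4, ?_, ?_, h8⟩
    · intro i
      have := h2 i
      dsimp only
      split_ifs with h <;> omega
    · convert hc using 1
      funext i
      split_ifs with h <;> simp [h]
  · rintro ⟨m, c, z, hx, hc, h8⟩
    refine ⟨m % 2, by omega, ?_, ?_, by omega⟩
    · intro i
      have := hx i
      omega
    · have e : (fun i => if (4:ℤ) ∣ (x i - m % 2 - 2) then (1 : ZMod 2) else 0) =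
          (fun i => (c i : ZMod 2)) + ((m / 2 : ℤ) : ZMod 2) • (fun _ => 1 : Fin 24 → ZMod 2) := by
        funext i
        simp only [Pi.add_apply, Pi.smul_apply, smul_eq_mul, mul_one]
        rw [← Int.cast_add]
        have hxi := hx i
        split_ifs with h
        · have : (c i + m / 2) % 2 = 1 := by omega
          symm
          have h3 : ((c i + m / 2 : ℤ) : ZMod 2) = ((1 : ℤ) : ZMod 2) :=
            (ZMod.intCast_eq_intCast_iff _ _ 2).2 (by unfold Int.ModEq; push_cast; omega)
          simpa using h3
        · have : (c i + m / 2) % 2 = 0 := by omega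
          symm
          have h3 : ((c i + m / 2 : ℤ) : ZMod 2) = ((0 : ℤ) : ZMod 2) :=
            (ZMod.intCast_eq_intCast_iff _ _ 2).2 (by unfold Int.ModEq; push_cast; omega)
          simpa using h3
      rw [e]
      exact GolayCode.add_mem hc (GolayCode.smul_mem _ golay_one)

theorem IsLeech.sub {x y : Fin 24 → ℤ} (hx : IsLeech x) (hy : IsLeech y) : IsLeech (x - y) := by
  rw [isLeech_iff] at *
  obtain ⟨m, c, z, h1, h2, h3⟩ := hx
  obtain ⟨m', c', z', h1', h2', h3'⟩ := hy
  refine ⟨m - m', c - c', z - z', ?_, ?_, ?_⟩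
  · intro i
    simp only [Pi.sub_apply, h1 i, h1' i]; ring
  · have : (fun i => (((c - c') i : ℤ) : ZMod 2)) =
        (fun i => (c i : ZMod 2)) - (fun i => (c' i : ZMod 2)) := by
      funext i; simp
    rw [this]
    exact GolayCode.sub_mem h2 h2'
  · simp only [Pi.sub_apply, Finset.sum_sub_distrib]
    omega

theorem leech_dot {x y : Fin 24 → ℤ} (hx : IsLeech x) (hy : IsLeech y) : (8 : ℤ) ∣ dotZ x y := by
  rw [isLeech_iff] at *
  obtain ⟨m, c, z, h1, h2, h3⟩ := hx
  obtain ⟨m', c', z', h1', h2', h3'⟩ := hy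
  have ho := golay_orth _ _ h2 h2'
  have ho' : (2 : ℤ) ∣ ∑ i, c i * c' i := by
    have := (ZMod.intCast_zmod_eq_zero_iff_dvd (∑ i, c i * c' i) 2).1 (by push_cast; exact ho)
    exact_mod_cast this
  obtain ⟨s, hs⟩ := ho'
  obtain ⟨t, ht⟩ := h3
  obtain ⟨t', ht'⟩ := h3'
  have e : dotZ x y = m * ∑ i, y i + m' * ∑ i, x i - 24 * m * m' + 4 * ∑ i, c i * c' i
      + 8 * ∑ i, (c i * z' i + z i * c' i + 2 * z i * z' i) := by
    have : (24 : ℤ) * m * m' = ∑ i : Fin 24, m * m' := by simp; ring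
    rw [this, Finset.mul_sum, Finset.mul_sum, Finset.mul_sum, Finset.mul_sum, dotZ,
      ← Finset.sum_add_distrib, ← Finset.sum_sub_distrib, ← Finset.sum_add_distrib,
      ← Finset.sum_add_distrib]
    refine Finset.sum_congr rfl fun i _ => ?_
    rw [h1 i, h1' i]; ring
  rw [e, hs, show ∑ i, x i = 8 * t + 4 * m by linarith, show ∑ i, y i = 8 * t' + 4 * m' by linarith]
  exact ⟨m * t' + m' * t - 2 * m * m' + s + ∑ i, (c i * z' i + z i * c' i + 2 * z i * z' i), by ring⟩

theorem leech_min {x : Fin 24 → ℤ} (hx : IsLeech x) (h : dotZ x x < 24) : x = 0 := by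
  obtain ⟨m, hm, h2, hc, h8⟩ := hx
  rcases hm with rfl | rfl
  · have h0 : (fun i => if (4:ℤ) ∣ (x i - 0 - 2) then (1 : ZMod 2) else 0) = 0 := by
      by_contra hne
      have hw := golay_weight _ hc hne
      have : ∑ i : Fin 24, (4 : ℤ) * (if (if (4:ℤ) ∣ (x i - 0 - 2) then (1 : ZMod 2) else 0) = 1
          then (1 : ℤ) else 0) ≤ dotZ x x := by
        refine Finset.sum_le_sum fun i _ => ?_
        by_cases h4 : (4:ℤ) ∣ (x i - 0 - 2)
        · simp only [h4, if_true]
          obtain ⟨k, hk⟩ := h4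
          have : x i = 4 * k + 2 := by linarith
          rw [this]
          nlinarith [mul_self_nonneg (2 * k + 1), (by rcases lt_or_ge k 0 with h | h <;> nlinarith : (0:ℤ) ≤ k * (k + 1))]
        · simp only [h4, if_false]
          simpa using mul_self_nonneg (x i)
      rw [← Finset.mul_sum] at this
      linarith
    have h4 : ∀ i, ∃ z : ℤ, x i = 4 * z := by
      intro i
      have hi := congrFun h0 i
      have h2i := h2 i
      split_ifs at hi with hd
      · exact absurd hi one_ne_zero
      · exact ⟨x i / 4, by omega⟩
    choose z hz using h4
    have hq : dotZ x x = 16 * ∑ i, z i * z i := by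
      rw [dotZ, Finset.mul_sum]
      exact Finset.sum_congr rfl fun i _ => by rw [hz i]; ring
    have hl : ∑ i, x i = 4 * ∑ i, z i := by
      rw [Finset.mul_sum]
      exact Finset.sum_congr rfl fun i _ => hz i
    have hpar : (2 : ℤ) ∣ ∑ i, z i * z i - ∑ i, z i := by
      rw [← Finset.sum_sub_distrib]
      refine Finset.dvd_sum fun i _ => ?_
      have := Int.even_mul_pred_self (z i)
      rw [mul_sub, mul_one] at this
      exact this.two_dvd
    have hnn : 0 ≤ ∑ i, z i * z i := Finset.sum_nonneg fun i _ => mul_self_nonneg _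
    have hzero : ∑ i, z i * z i = 0 := by omega
    rw [Finset.sum_eq_zero_iff_of_nonneg (fun i _ => mul_self_nonneg _)] at hzero
    funext i
    have := mul_self_eq_zero.1 (hzero i (Finset.mem_univ i))
    rw [hz i, this]; rfl
  · exfalso
    have : ∑ i : Fin 24, (1 : ℤ) ≤ dotZ x x := by
      refine Finset.sum_le_sum fun i _ => ?_
      have : x i ≠ 0 := by have := h2 i; omega
      have := mul_self_pos.2 this
      omega
    simp at this
    omega

/-! ### The set `T_AB` -/

theorem dot_vA (x : Fin 24 → ℤ) : dotZ x vA = 4 * x 21 - 4 * x 23 := by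
  simp [dotZ, vA, Fin.sum_univ_succ]
  ring_nf

theorem dot_vB (x : Fin 24 → ℤ) : dotZ x vB = 4 * x 22 - 4 * x 23 := by
  simp [dotZ, vB, Fin.sum_univ_succ]
  ring_nf

theorem mem_TAB (T : Fin 24 → ℤ) : T ∈ TAB ↔
    IsLeech T ∧ dotZ T T = 32 ∧ T 21 = T 23 + 4 ∧ T 22 = T 23 + 4 := by
  have hA : dotZ vA vA = 32 := by rw [dot_vA]; rfl
  have hB : dotZ vB vB = 32 := by rw [dot_vB]; rfl
  have e : ∀ x : Fin 24 → ℤ, leechInner x x = 4 ↔ dotZ x x = 32 := by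
    intro x
    rw [leechInner_eq, div_eq_iff (by norm_num)]
    norm_num
    exact_mod_cast Iff.rfl
  simp only [TAB, Set.mem_ofPred_eq, e]
  refine and_congr_right fun _ => and_congr_right fun hT => ?_
  rw [dotZ_sub_left, dotZ_sub_right, dotZ_sub_right, dotZ_comm vA T, hT, hA, dot_vA,
    dotZ_sub_left, dotZ_sub_right, dotZ_sub_right, dotZ_comm vB T, hT, hB, dot_vB]
  constructor <;> rintro ⟨h1, h2⟩ <;> constructor <;> omega

theorem leech_vA : IsLeech vA := by
  refine ⟨0, Or.inl rfl, by decide, ?_, by decide⟩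
  have : (fun i => if (4:ℤ) ∣ (vA i - 0 - 2) then (1 : ZMod 2) else 0) = 0 := by decide +kernel
  rw [this]; exact GolayCode.zero_mem

theorem leech_vB : IsLeech vB := by
  refine ⟨0, Or.inl rfl, by decide, ?_, by decide⟩
  have : (fun i => if (4:ℤ) ∣ (vB i - 0 - 2) then (1 : ZMod 2) else 0) = 0 := by decide +kernel
  rw [this]; exact GolayCode.zero_mem

theorem TAB_dot {T U : Fin 24 → ℤ} (hT : T ∈ TAB) (hU : U ∈ TAB) :
    T = U ∨ dotZ T U = 0 ∨ dotZ T U = 8 ∨ dotZ T U = 16 := by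
  rw [mem_TAB] at hT hU
  obtain ⟨lT, nT, aT, bT⟩ := hT
  obtain ⟨lU, nU, aU, bU⟩ := hU
  by_cases hne : T = U
  · exact Or.inl hne
  refine Or.inr ?_
  have h8 := leech_dot lT lU
  have n1 : dotZ (T - U) (T - U) = 64 - 2 * dotZ T U := by
    rw [dotZ_sub_left, dotZ_sub_right, dotZ_sub_right, dotZ_comm U T, nT, nU]; ring
  have h1 : 24 ≤ 64 - 2 * dotZ T U := by
    by_contra hlt
    exact hne (sub_eq_zero.1 (leech_min (lT.sub lU) (by omega)))
  have hA : dotZ T vA = 16 := by rw [dot_vA]; omega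
  have hB : dotZ T vB = 16 := by rw [dot_vB]; omega
  have hA' : dotZ U vA = 16 := by rw [dot_vA]; omega
  have hB' : dotZ U vB = 16 := by rw [dot_vB]; omega
  have hAA : dotZ vA vA = 32 := by rw [dot_vA]; rfl
  have hBB : dotZ vB vB = 32 := by rw [dot_vB]; rfl
  have hAB : dotZ vA vB = 16 := by rw [dot_vB]; rfl
  -- the vector `(T - A) - (B - U)`
  have n2 : dotZ ((T - vA) - (vB - U)) ((T - vA) - (vB - U)) = 32 + 2 * dotZ T U := by
    simp only [dotZ_sub_left, dotZ_sub_right]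
    rw [dotZ_comm vA T, dotZ_comm vB T, dotZ_comm U T, dotZ_comm vA U, dotZ_comm vB U,
      dotZ_comm vB vA]
    omega
  have h2 : 24 ≤ 32 + 2 * dotZ T U := by
    by_contra hlt
    have := leech_min ((lT.sub leech_vA).sub (leech_vB.sub lU)) (by omega)
    have hz : dotZ T ((T - vA) - (vB - U)) = 0 := by rw [this]; simp [dotZ]
    simp only [dotZ_sub_right] at hz
    omega
  omega

/-! ### Soundness of the enumeration -/

def vecN (l : List ℕ) : Fin 24 → ℤ := fun i => (l.getD i.val 0 : ℤ) - 4

theorem congr2_spec (m : ℕ) : ∀ (bs : List Bool) (xs : List ℕ), congr2 m bs xs = true →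
    bs.length = xs.length ∧ ∀ i < bs.length, xs.getD i 0 % 2 = m ∧
      (xs.getD i 0 % 4 = m + 2 ↔ bs.getD i false = true)
  | [], [], _ => by simp
  | [], _ :: _, h => by simp [congr2] at h
  | _ :: _, [], h => by simp [congr2] at h
  | b :: bs, x :: xs, h => by
    simp only [congr2, Bool.and_eq_true, Nat.beq_eq, beq_iff_eq] at h
    obtain ⟨⟨h1, h2⟩, h3⟩ := h
    obtain ⟨ih1, ih2⟩ := congr2_spec m bs xs h3
    refine ⟨by simp [ih1], ?_⟩
    intro i hi
    cases i with
    | zero =>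
      simp only [List.getD_cons_zero]
      refine ⟨h1, ?_⟩
      rw [← h2, Nat.beq_eq]
      rfl
    | succ i =>
      simp only [List.getD_cons_succ]
      exact ih2 i (by simpa using hi)

theorem bitsAux_length (c n : ℕ) : (bitsAux c n).length = n := by
  induction n with
  | zero => rfl
  | succ n ih => simp [bitsAux, ih]

theorem bitsAux_getD (c n i : ℕ) (h : i < n) : (bitsAux c n).getD i false = c.testBit (n - 1 - i) := by
  induction n generalizing i with
  | zero => omega
  | succ n ih =>
    cases i with
    | zero => simp [bitsAux, tb_eq]
    | succ i =>
      rw [bitsAux, List.getD_cons_succ, ih i (by omega)]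
      congr 1; omega

theorem lsum_eq (l : List ℕ) : lsum l = ∑ i ∈ Finset.range l.length, l.getD i 0 := by
  induction l with
  | nil => rfl
  | cons x l ih =>
    rw [List.length_cons, Finset.sum_range_succ', lsum, ih]
    simp [Nat.add_comm]

theorem lsum_eq_sum (l : List ℕ) : lsum l = l.sum := by
  induction l with
  | nil => rfl
  | cons x l ih => rw [lsum, ih, List.sum_cons]; rfl

theorem sqsum_eq (l : List ℕ) :
    sqsum l = ∑ i ∈ Finset.range l.length, l.getD i 0 * l.getD i 0 := by
  induction l with
  | nil => rfl
  | cons x l ih =>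
    rw [List.length_cons, Finset.sum_range_succ', sqsum, ih]
    simp [Nat.add_comm]

theorem horner_eq (B : ℕ) (l : List ℕ) :
    horner B l = ∑ i ∈ Finset.range l.length, l.getD i 0 * B ^ i := by
  induction l with
  | nil => rfl
  | cons x l ih =>
    rw [List.length_cons, Finset.sum_range_succ', horner, ih]
    simp only [Nat.add_eq, Nat.mul_eq, List.getD_cons_succ, List.getD_cons_zero, pow_zero, mul_one]
    rw [Finset.mul_sum, Nat.add_comm]
    congr 1
    exact Finset.sum_congr rfl fun i _ => by ring

theorem LL_codes : ∀ p ∈ LL, p.1 ∈ codes := by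
  intro p hp
  have h0 : 0 ∈ codes := zero_mem_gen _
  simp only [LL, List.mem_append] at hp
  rcases hp with hp | hp | hp | hp
  · simp only [L0, List.mem_singleton] at hp
    rw [hp]; exact h0
  · simp only [Loct, List.mem_flatMap, List.mem_map] at hp
    obtain ⟨c, hc, l, _, rfl⟩ := hp
    exact List.mem_of_mem_filter (List.mem_of_mem_filter hc)
  · simp only [Lodd, List.mem_map] at hp
    obtain ⟨c, hc, rfl⟩ := hp
    exact List.mem_of_mem_filter hc
  · simp only [L4, List.mem_flatMap, List.mem_map] at hp
    obtain ⟨i, _, s, _, rfl⟩ := hp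
    exact h0

theorem sound_aux (m c : ℕ) (l : List ℕ) (hm : m = 0 ∨ m = 1) (hc : c ∈ codes)
    (h1 : congr2 m (bits c) l = true) (h8 : lsum l % 8 = 4 * m) :
    l.length = 24 ∧ IsLeech (vecN l) := by
  obtain ⟨hlen, hb⟩ := congr2_spec _ _ _ h1
  rw [bits, bitsAux_length] at hlen hb
  refine ⟨hlen.symm, (m : ℤ), by rcases hm with rfl | rfl <;> simp, ?_, ?_, ?_⟩
  · intro i
    have := (hb i.val i.isLt).1
    simp only [vecN]
    omega
  · rw [golay_iff]
    refine ⟨c, hc, ?_⟩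
    funext i
    have := (hb i.val i.isLt).2
    rw [bitsAux_getD c 24 i.val i.isLt] at this
    simp only [cvec, vecN]
    have e : (4 : ℤ) ∣ ((l.getD i.val 0 : ℕ) : ℤ) - 4 - (m : ℤ) - 2 ↔ l.getD i.val 0 % 4 = m + 2 := by
      omega
    rw [show 24 - 1 - i.val = 23 - i.val by omega] at this
    simp only [e, this]
  · have : ∑ i, vecN l i = (lsum l : ℤ) - 96 := by
      rw [lsum_eq, ← hlen, ← Fin.sum_univ_eq_sum_range (fun i => l.getD i 0)]
      simp only [vecN, Finset.sum_sub_distrib]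
      push_cast
      simp
    rw [this]
    omega

theorem sound : ∀ p ∈ LL, p.2.length = 24 ∧ vecN p.2 ∈ TAB := by
  intro p hp
  have hg := List.all_eq_true.1 good_ok p hp
  have hc := LL_codes p hp
  simp only [good, Bool.and_eq_true, Bool.or_eq_true, Nat.beq_eq, Nat.add_eq, Nat.mul_eq] at hg
  obtain ⟨⟨⟨h1, h2⟩, h3⟩, h4⟩ := hg
  have key : p.2.length = 24 ∧ IsLeech (vecN p.2) := by
    rcases h4 with h | h
    · exact sound_aux 0 p.1 p.2 (Or.inl rfl) hc h.1 h.2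
    · exact sound_aux 1 p.1 p.2 (Or.inr rfl) hc h.1 h.2
  refine ⟨key.1, (mem_TAB _).2 ⟨key.2, ?_, ?_, ?_⟩⟩
  · have h1' : ((sqsum p.2 : ℕ) : ℤ) + 352 = 8 * (lsum p.2 : ℕ) := by exact_mod_cast h1
    rw [lsum_eq, sqsum_eq, key.1, ← Fin.sum_univ_eq_sum_range (fun i => p.2.getD i 0),
      ← Fin.sum_univ_eq_sum_range (fun i => p.2.getD i 0 * p.2.getD i 0)] at h1'
    push_cast at h1'
    have : dotZ (vecN p.2) (vecN p.2) = (∑ i : Fin 24, (p.2.getD i.val 0 : ℤ) * (p.2.getD i.val 0 : ℤ))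
        - 8 * (∑ i : Fin 24, (p.2.getD i.val 0 : ℤ)) + ∑ i : Fin 24, (16 : ℤ) := by
      rw [Finset.mul_sum, ← Finset.sum_sub_distrib, ← Finset.sum_add_distrib]
      exact Finset.sum_congr rfl fun i _ => by simp only [vecN]; ring
    rw [this]
    simp only [Finset.sum_const, Finset.card_univ, Fintype.card_fin, nsmul_eq_mul]
    push_cast
    linarith
  · simp only [vecN]
    show ((p.2.getD 21 0 : ℕ) : ℤ) - 4 = ((p.2.getD 23 0 : ℕ) : ℤ) - 4 + 4
    omega
  · simp only [vecN]
    show ((p.2.getD 22 0 : ℕ) : ℤ) - 4 = ((p.2.getD 23 0 : ℕ) : ℤ) - 4 + 4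
    omega

/-! ### Completeness of the enumeration -/

theorem mem_choices : ∀ (bs : List Bool) (l : List ℕ),
    List.Forall₂ (fun b x => if b = true then x = 6 ∨ x = 2 else x = 4) bs l → l ∈ choices bs
  | [], _, h => by cases h; simp [choices]
  | b :: bs, _, h => by
    cases h with
    | cons h1 h2 =>
      have ih := mem_choices bs _ h2
      cases b with
      | false =>
        simp only [Bool.false_eq_true, if_false] at h1
        subst h1
        simp [choices, ih]
      | true =>
        simp only [if_true] at h1
        rcases h1 with rfl | rfl <;> simp [choices, ih]

def tailL (T : Fin 24 → ℤ) : List ℕ := (List.ofFn fun i : Fin 21 => (T (i.castLE (by omega)) + 4).toNat)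

theorem vecN_full (T : Fin 24 → ℤ) (a b c : ℕ) (h : ∀ i, -4 ≤ T i) (ha : T 21 = (a : ℤ) - 4)
    (hb : T 22 = (b : ℤ) - 4) (hc : T 23 = (c : ℤ) - 4) : vecN (tailL T ++ [a, b, c]) = T := by
  have hl : (tailL T).length = 21 := by simp [tailL]
  funext i
  by_cases hi : i.val < 21
  · have := h i
    simp only [vecN]
    rw [List.getD_append _ _ _ _ (by omega), List.getD_eq_getElem _ _ (by omega)]
    simp only [tailL, List.getElem_ofFn]
    have e : (Fin.castLE (by omega : 21 ≤ 24) ⟨i.val, hi⟩ : Fin 24) = i := rfl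
    rw [e]; omega
  · simp only [vecN]
    rw [List.getD_append_right _ _ _ _ (by omega), hl]
    have : i = 21 ∨ i = 22 ∨ i = 23 := by omega
    rcases this with rfl | rfl | rfl
    · simpa using ha.symm
    · simpa using hb.symm
    · simpa using hc.symm

theorem sum_split (f : Fin 24 → ℤ) : ∑ i, f i =
    ∑ i : Fin 21, f (i.castLE (by omega)) + f 21 + f 22 + f 23 := by
  rw [Fin.sum_univ_castSucc, Fin.sum_univ_castSucc, Fin.sum_univ_castSucc]
  rfl

theorem bits_take (c : ℕ) : (bits c).take 21 = List.ofFn fun i : Fin 21 => c.testBit (23 - i.val) := by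
  have hl : (bits c).length = 24 := bitsAux_length c 24
  apply List.ext_getElem
  · simp [hl]
  · intro i h1 h2
    have hi : i < 21 := by simpa using h2
    rw [List.getElem_take, List.getElem_ofFn, ← List.getD_eq_getElem _ false, bits,
      bitsAux_getD c 24 i (by omega)]

theorem complete_odd (T : Fin 24 → ℤ) (c : ℕ) (hc : c ∈ codes)
    (h : ∀ i : Fin 24, i.val < 21 → (c.testBit (23 - i.val) = true → T i = -1) ∧
      (c.testBit (23 - i.val) = false → T i = 1))
    (h21 : T 21 = 1) (h22 : T 22 = 1) (h23 : T 23 = -3)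
    (b2 : c.testBit 2 = false) (b1 : c.testBit 1 = false) (b0 : c.testBit 0 = false) :
    ∃ p ∈ LL, vecN p.2 = T := by
  have ht : tailL T = ((bits c).take 21).map (fun b => bif b then 3 else 5) := by
    rw [bits_take, List.map_ofFn, tailL]
    congr 1
    funext i
    obtain ⟨h1, h2⟩ := h (i.castLE (by omega)) i.isLt
    simp only [Fin.val_castLE] at h1 h2
    simp only [Function.comp]
    cases hb : c.testBit (23 - i.val)
    · rw [h2 hb]; rfl
    · rw [h1 hb]; rfl
  refine ⟨(c, tailL T ++ [5, 5, 1]), ?_, ?_⟩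
  · simp only [LL, List.mem_append]
    refine Or.inr (Or.inr (Or.inl ?_))
    simp only [Lodd, List.mem_map, List.mem_filter]
    exact ⟨c, ⟨hc, by simp [tb_eq, b2, b1, b0]⟩, by rw [ht]⟩
  · apply vecN_full
    · intro i
      by_cases hi : i.val < 21
      · obtain ⟨h1, h2⟩ := h i hi
        cases hb : c.testBit (23 - i.val)
        · rw [h2 hb]; norm_num
        · rw [h1 hb]; norm_num
      · have : i = 21 ∨ i = 22 ∨ i = 23 := by omega
        rcases this with rfl | rfl | rfl <;> omega
    · rw [h21]; norm_num
    · rw [h22]; norm_num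
    · rw [h23]; norm_num

theorem complete_oct (T : Fin 24 → ℤ) (c : ℕ) (hc : c ∈ codes)
    (h : ∀ i : Fin 24, i.val < 21 → (c.testBit (23 - i.val) = true → T i = 2 ∨ T i = -2) ∧
      (c.testBit (23 - i.val) = false → T i = 0))
    (h21 : T 21 = 2) (h22 : T 22 = 2) (h23 : T 23 = -2)
    (b2 : c.testBit 2 = true) (b1 : c.testBit 1 = true) (b0 : c.testBit 0 = true)
    (hw : wtL (bits c) = 8) (h8 : (8 : ℤ) ∣ ∑ i, T i) :
    ∃ p ∈ LL, vecN p.2 = T := by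
  have hlow : ∀ i, -4 ≤ T i := by
    intro i
    by_cases hi : i.val < 21
    · obtain ⟨h1, h2⟩ := h i hi
      cases hb : c.testBit (23 - i.val)
      · rw [h2 hb]; norm_num
      · rcases h1 hb with h | h <;> rw [h] <;> norm_num
    · have : i = 21 ∨ i = 22 ∨ i = 23 := by omega
      rcases this with rfl | rfl | rfl <;> omega
  have ht : tailL T ∈ choices ((bits c).take 21) := by
    apply mem_choices
    rw [bits_take, tailL, List.forall₂_iff_get]
    refine ⟨by simp, ?_⟩
    intro i hi1 hi2
    have hi : i < 21 := by simpa using hi1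
    obtain ⟨h1, h2⟩ := h ⟨i, by omega⟩ hi
    simp only at h1 h2
    simp only [List.get_eq_getElem, List.getElem_ofFn, Fin.castLE_mk]
    cases hb : c.testBit (23 - i)
    · rw [h2 hb]; simp
    · rcases h1 hb with h | h <;> rw [h] <;> simp
  have hs : lsum (tailL T) % 8 = 2 := by
    have e : ((lsum (tailL T) : ℕ) : ℤ) = ∑ i : Fin 21, T (i.castLE (by omega)) + 84 := by
      rw [lsum_eq_sum, tailL, List.sum_ofFn]
      push_cast
      have : (84 : ℤ) = ∑ i : Fin 21, (4 : ℤ) := by simp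
      rw [this, ← Finset.sum_add_distrib]
      refine Finset.sum_congr rfl fun i _ => ?_
      have := hlow (i.castLE (by omega))
      omega
    rw [sum_split, h21, h22, h23] at h8
    omega
  refine ⟨(c, tailL T ++ [6, 6, 2]), ?_, ?_⟩
  · simp only [LL, List.mem_append]
    refine Or.inr (Or.inl ?_)
    simp only [Loct, List.mem_flatMap, List.mem_map, List.mem_filter]
    refine ⟨c, ⟨⟨hc, by simp [tb_eq, b2, b1, b0]⟩, by rw [hw]; rfl⟩, tailL T, ⟨ht, ?_⟩, rfl⟩
    rw [Nat.beq_eq]; exact hs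
  · apply vecN_full _ _ _ _ hlow
    · rw [h21]; norm_num
    · rw [h22]; norm_num
    · rw [h23]; norm_num

theorem complete_four (T : Fin 24 → ℤ) (k : Fin 24) (hk : k.val < 21) (hT : T k = 4 ∨ T k = -4)
    (h : ∀ i : Fin 24, i.val < 21 → i ≠ k → T i = 0)
    (h21 : T 21 = 0) (h22 : T 22 = 0) (h23 : T 23 = -4) :
    ∃ p ∈ LL, vecN p.2 = T := by
  have hlow : ∀ i, -4 ≤ T i := by
    intro i
    by_cases hi : i.val < 21
    · by_cases hik : i = k
      · subst hik; omega
      · rw [h i hi hik]; norm_num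
    · have : i = 21 ∨ i = 22 ∨ i = 23 := by omega
      rcases this with rfl | rfl | rfl <;> omega
  refine ⟨(0, tailL T ++ [4, 4, 0]), ?_, ?_⟩
  · simp only [LL, List.mem_append]
    refine Or.inr (Or.inr (Or.inr ?_))
    simp only [L4, List.mem_flatMap, List.mem_map]
    refine ⟨20 - k.val, by simp; omega, (T k + 4).toNat, by rcases hT with h | h <;> simp [h], ?_⟩
    congr 2
    rw [tailL]
    apply List.ext_getElem
    · simp
    · intro i h1 h2
      have hi : i < 21 := by simpa using h1
      simp only [List.getElem_map, List.getElem_range, List.getElem_ofFn, Fin.castLE_mk]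
      by_cases hik : i = k.val
      · have : Nat.beq (Nat.add i (20 - k.val)) 20 = true := by
          rw [Nat.beq_eq, Nat.add_eq]; omega
        rw [this, cond_true]
        subst hik; rfl
      · have : Nat.beq (Nat.add i (20 - k.val)) 20 = false := by
          rw [Bool.eq_false_iff, Ne, Nat.beq_eq, Nat.add_eq]; omega
        rw [this, cond_false, h ⟨i, by omega⟩ hi (by intro e; apply hik; rw [← e])]
        rfl
  · apply vecN_full _ _ _ _ hlow
    · rw [h21]; norm_num
    · rw [h22]; norm_num
    · rw [h23]; norm_num

theorem complete_zero (T : Fin 24 → ℤ) (h : ∀ i : Fin 24, i.val < 21 → T i = 0)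
    (h21 : T 21 = 4) (h22 : T 22 = 4) (h23 : T 23 = 0) :
    ∃ p ∈ LL, vecN p.2 = T := by
  refine ⟨(0, tailL T ++ [8, 8, 4]), ?_, ?_⟩
  · simp only [LL, List.mem_append]
    refine Or.inl ?_
    simp only [L0, List.mem_singleton]
    congr 2
    apply List.ext_getElem
    · simp [tailL]
    · intro i h1 h2
      have hi : i < 21 := by simpa [tailL] using h1
      simp only [tailL, List.getElem_ofFn, List.getElem_replicate, Fin.castLE_mk]
      rw [h ⟨i, by omega⟩ hi]; rfl
  · apply vecN_full
    · intro i
      by_cases hi : i.val < 21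
      · rw [h i hi]; norm_num
      · have : i = 21 ∨ i = 22 ∨ i = 23 := by omega
        rcases this with rfl | rfl | rfl <;> omega
    · rw [h21]; norm_num
    · rw [h22]; norm_num
    · rw [h23]; norm_num

/-- coordinate-free form of first 21 coordinates -/
theorem forall_first {P : Fin 24 → Prop} (h : ∀ i : Fin 21, P (i.castLE (by omega))) :
    ∀ i : Fin 24, i.val < 21 → P i := fun i hi => h ⟨i.val, hi⟩

theorem complete {T : Fin 24 → ℤ} (hT : T ∈ TAB) : ∃ p ∈ LL, vecN p.2 = T := by
  obtain ⟨⟨m, hm, h2, hc, h8⟩, hn, e21, e22⟩ := (mem_TAB T).1 hT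
  obtain ⟨c, hcc, hcv⟩ := (golay_iff _).1 hc
  have hbit : ∀ i : Fin 24, c.testBit (23 - i.val) = true ↔ (4 : ℤ) ∣ T i - m - 2 := by
    intro i
    have := congrFun hcv i
    simp only [cvec] at this
    split_ifs at this with h1 h2 h2
    · exact ⟨fun _ => h1, fun _ => h2⟩
    · exact absurd this (by decide)
    · exact absurd this (by decide)
    · exact ⟨fun h => absurd h h2, fun h => absurd h h1⟩
  have b2 := hbit 21
  have b1 := hbit 22
  have b0 := hbit 23
  simp only [show 23 - (21 : Fin 24).val = 2 from rfl] at b2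
  simp only [show 23 - (22 : Fin 24).val = 1 from rfl] at b1
  simp only [show 23 - (23 : Fin 24).val = 0 from rfl] at b0
  rw [dotZ, sum_split, e21, e22] at hn
  set S := ∑ i : Fin 21, T (i.castLE (by omega)) * T (i.castLE (by omega)) with hS
  set d := T 23 with hd
  rcases hm with rfl | rfl
  · -- even case
    have hS0 : 0 ≤ S := Finset.sum_nonneg fun i _ => mul_self_nonneg _
    have hd0 : d ≤ 0 := by nlinarith
    have hd5 : -6 < d := by nlinarith
    have hd2 := h2 23
    rw [← hd] at hd2
    have hw : ∀ i : Fin 21, 4 * (if c.testBit (23 - i.val) = true then (1 : ℤ) else 0) ≤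
        T (i.castLE (by omega)) * T (i.castLE (by omega)) := by
      intro i
      have hb := hbit (i.castLE (by omega))
      rw [Fin.val_castLE] at hb
      split_ifs with h
      · obtain ⟨k, hk⟩ := hb.1 h
        have : T (i.castLE (by omega)) = 4 * k + 2 := by linarith
        rw [this]
        nlinarith [(by rcases lt_or_ge k 0 with h | h <;> nlinarith : (0:ℤ) ≤ k * (k + 1))]
      · simpa using mul_self_nonneg _
    have hwS : 4 * ∑ i : Fin 21, (if c.testBit (23 - i.val) = true then (1 : ℤ) else 0) ≤ S := by
      rw [Finset.mul_sum]
      exact Finset.sum_le_sum fun i _ => hw i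
    have hwt := wt_sum c
    have hcvb : ∀ i : Fin 24, (if cvec c i = 1 then (1 : ℤ) else 0) =
        if c.testBit (23 - i.val) = true then 1 else 0 := by
      intro i
      cases h : c.testBit (23 - i.val) <;> simp [cvec, h]
    simp only [hcvb] at hwt
    rw [sum_split] at hwt
    simp only [Fin.val_castLE, show 23 - (21 : Fin 24).val = 2 from rfl,
      show 23 - (22 : Fin 24).val = 1 from rfl, show 23 - (23 : Fin 24).val = 0 from rfl] at hwt
    have hwall := List.all_eq_true.1 wt_ok c hcc
    rw [Bool.or_eq_true, Nat.beq_eq, Nat.ble_eq] at hwall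
    have hcases : d = 0 ∨ d = -2 ∨ d = -4 := by omega
    rcases hcases with h0 | h0 | h0
    · -- the vector (0, …, 0, 4, 4, 0)
      rw [h0] at hn
      have hSz : S = 0 := by linarith
      rw [hS, Finset.sum_eq_zero_iff_of_nonneg (fun i _ => mul_self_nonneg _)] at hSz
      refine complete_zero T (forall_first fun i => mul_self_eq_zero.1 (hSz i (Finset.mem_univ i)))
        (by omega) (by omega) h0
    · -- octads
      have t2 : c.testBit 2 = true := b2.2 (by omega)
      have t1 : c.testBit 1 = true := b1.2 (by omega)
      have t0 : c.testBit 0 = true := b0.2 (by omega)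
      rw [h0] at hn
      simp only [t2, t1, t0, if_true] at hwt
      have hcne : c ≠ 0 := by rintro rfl; simp at t0
      have hw8 : 8 ≤ wtL (bits c) := hwall.resolve_left hcne
      have hSv : S = 20 := by linarith
      have heq : 4 * ∑ i : Fin 21, (if c.testBit (23 - i.val) = true then (1 : ℤ) else 0) = S := by
        omega
      have hw8' : wtL (bits c) = 8 := by omega
      rw [Finset.mul_sum, hS, Finset.sum_eq_sum_iff_of_le (fun i _ => hw i)] at heq
      refine complete_oct T c hcc (forall_first fun i => ?_) (by omega) (by omega) h0 t2 t1 t0 hw8' ?_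
      · have := heq i (Finset.mem_univ i)
        rw [Fin.val_castLE]
        constructor
        · intro h
          rw [if_pos h] at this
          have : (T (i.castLE (by omega)) - 2) * (T (i.castLE (by omega)) + 2) = 0 := by linarith
          rcases mul_eq_zero.1 this with h | h
          · left; linarith
          · right; linarith
        · intro h
          rw [if_neg (by simp [h])] at this
          exact mul_self_eq_zero.1 (by linarith)
      · simpa using h8
    · -- vectors with one further coordinate ±4
      rw [h0] at hn
      have hSv : S = 16 := by linarith
      have t2 : ¬ c.testBit 2 = true := by rw [b2]; omega
      have t1 : ¬ c.testBit 1 = true := by rw [b1]; omega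
      have t0 : ¬ c.testBit 0 = true := by rw [b0]; omega
      simp only [if_neg t2, if_neg t1, if_neg t0] at hwt
      have hc0 : c = 0 := by
        rcases hwall with h | h
        · exact h
        · omega
      have h4 : ∀ i : Fin 21, (4 : ℤ) ∣ T (i.castLE (by omega)) := by
        intro i
        have ha := hbit (i.castLE (by omega))
        have hb := h2 (i.castLE (by omega))
        rw [hc0] at ha
        simp only [Nat.zero_testBit, Bool.false_eq_true, false_iff] at ha
        omega
      have hex : ∃ k : Fin 21, T (k.castLE (by omega)) ≠ 0 := by
        by_contra hno
        push Not at hno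
        have : S = 0 := by
          rw [hS]; exact Finset.sum_eq_zero fun i _ => by rw [hno i]; rfl
        omega
      obtain ⟨k, hk⟩ := hex
      have hk16 : 16 ≤ T (k.castLE (by omega)) * T (k.castLE (by omega)) := by
        obtain ⟨z, hz⟩ := h4 k
        rw [hz] at hk ⊢
        have : z ≠ 0 := by rintro rfl; simp at hk
        have := mul_self_pos.2 this
        nlinarith
      have hsplit := Finset.add_sum_erase Finset.univ
        (fun i : Fin 21 => T (i.castLE (by omega)) * T (i.castLE (by omega))) (Finset.mem_univ k)
      simp only at hsplit
      rw [← hS, hSv] at hsplit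
      have hrest0 : 0 ≤ ∑ i ∈ Finset.univ.erase k,
          T (i.castLE (by omega : 21 ≤ 24)) * T (i.castLE (by omega)) :=
        Finset.sum_nonneg fun i _ => mul_self_nonneg _
      have hrest : ∑ i ∈ Finset.univ.erase k,
          T (i.castLE (by omega : 21 ≤ 24)) * T (i.castLE (by omega)) = 0 := by linarith
      rw [hrest] at hsplit
      rw [Finset.sum_eq_zero_iff_of_nonneg (fun i _ => mul_self_nonneg _)] at hrest
      refine complete_four T (k.castLE (by omega)) k.isLt ?_ (forall_first fun i hi => ?_)
        (by omega) (by omega) h0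
      · have : (T (k.castLE (by omega)) - 4) * (T (k.castLE (by omega)) + 4) = 0 := by linarith
        rcases mul_eq_zero.1 this with h | h
        · left; linarith
        · right; linarith
      · refine mul_self_eq_zero.1 (hrest i (Finset.mem_erase.2 ⟨?_, Finset.mem_univ i⟩))
        rintro rfl
        exact hi rfl
  · -- odd case
    have h1 : ∀ i : Fin 21, (1 : ℤ) ≤ T (i.castLE (by omega)) * T (i.castLE (by omega)) := by
      intro i
      have : T (i.castLE (by omega)) ≠ 0 := by have := h2 (i.castLE (by omega)); omega
      have := mul_self_pos.2 this
      omega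
    have hS21 : 21 ≤ S := by
      have := Finset.sum_le_sum (s := Finset.univ) fun (i : Fin 21) _ => h1 i
      simpa using this
    have hd3 : -3 ≤ d := by nlinarith
    have hd3' : d < -2 := by nlinarith
    have h0 : d = -3 := by omega
    rw [h0] at hn
    have hSv : ∑ i : Fin 21, (1 : ℤ) = S := by simp; linarith
    rw [hS, Finset.sum_eq_sum_iff_of_le (fun i _ => h1 i)] at hSv
    refine complete_odd T c hcc (forall_first fun i => ?_) (by omega) (by omega) h0 ?_ ?_ ?_
    · have hv := hSv i (Finset.mem_univ i)
      have hb := hbit (i.castLE (by omega))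
      have : (T (i.castLE (by omega)) - 1) * (T (i.castLE (by omega)) + 1) = 0 := by linarith
      have hpm : T (i.castLE (by omega)) = 1 ∨ T (i.castLE (by omega)) = -1 := by
        rcases mul_eq_zero.1 this with h | h
        · left; linarith
        · right; linarith
      constructor
      · intro h
        have := hb.1 h
        omega
      · intro h
        have : ¬ (4 : ℤ) ∣ T (i.castLE (by omega)) - 1 - 2 := by rw [← hb, h]; simp
        omega
    · rw [Bool.eq_false_iff, Ne, b2]; omega
    · rw [Bool.eq_false_iff, Ne, b1]; omega
    · rw [Bool.eq_false_iff, Ne, b0]; omega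

/-! ### Moments of `T_AB` -/

theorem digits_unique (b : ℕ) : ∀ (n : ℕ) (f g : ℕ → ℕ), (∀ k < n, f k < b) → (∀ k < n, g k < b) →
    ∑ k ∈ Finset.range n, f k * b ^ k = ∑ k ∈ Finset.range n, g k * b ^ k → ∀ k < n, f k = g k := by
  intro n
  induction n with
  | zero => intro f g _ _ _ k hk; omega
  | succ n ih =>
    intro f g hf hg h k hk
    have step : ∀ f : ℕ → ℕ, ∑ k ∈ Finset.range (n + 1), f k * b ^ k =
        f 0 + b * ∑ k ∈ Finset.range n, f (k + 1) * b ^ k := by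
      intro f
      rw [Finset.sum_range_succ', Finset.mul_sum, add_comm]
      simp only [pow_zero, mul_one]
      congr 1
      exact Finset.sum_congr rfl fun i _ => by ring
    rw [step f, step g] at h
    have hf0 := hf 0 (by omega)
    have hg0 := hg 0 (by omega)
    have h0 : f 0 = g 0 := by
      have := congrArg (· % b) h
      simpa [Nat.add_mul_mod_self_left, Nat.mod_eq_of_lt hf0, Nat.mod_eq_of_lt hg0] using this
    have h1 : ∑ k ∈ Finset.range n, f (k + 1) * b ^ k = ∑ k ∈ Finset.range n, g (k + 1) * b ^ k := by
      rw [h0] at h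
      exact Nat.eq_of_mul_eq_mul_left (by omega) (Nat.add_left_cancel h)
    cases k with
    | zero => exact h0
    | succ k =>
      exact ih (fun k => f (k + 1)) (fun k => g (k + 1)) (fun k hk => hf _ (by omega))
        (fun k hk => hg _ (by omega)) h1 k (by omega)

theorem digits_lt (b : ℕ) : ∀ (n : ℕ) (f : ℕ → ℕ), (∀ k < n, f k < b) →
    ∑ k ∈ Finset.range n, f k * b ^ k < b ^ n := by
  intro n
  induction n with
  | zero => intro f _; simp
  | succ n ih =>
    intro f hf
    rw [Finset.sum_range_succ, pow_succ]
    have h1 := ih f fun k hk => hf k (by omega)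
    have h2 := hf n (by omega)
    have h3 : (f n + 1) * b ^ n ≤ b * b ^ n := Nat.mul_le_mul_right _ h2
    nlinarith

theorem sortedB_pairwise : ∀ l : List ℕ, sortedB l = true → l.Pairwise (· < ·)
  | [], _ => List.Pairwise.nil
  | [a], _ => by simp
  | a :: b :: t, h => by
    simp only [sortedB, Bool.and_eq_true] at h
    have hab : a < b := by simpa [Nat.blt_eq] using h.1
    have ih := sortedB_pairwise (b :: t) (by simp only [sortedB, Bool.and_eq_true]; exact h.2)
    refine List.pairwise_cons.2 ⟨?_, ih⟩
    intro c hc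
    rcases List.mem_cons.1 hc with rfl | hc
    · exact hab
    · exact hab.trans ((List.pairwise_cons.1 ih).1 c hc)

theorem keys_nodup : (LL.map fun p => skey p.2).Nodup :=
  (sortedB_pairwise _ sorted_ok).imp fun h => ne_of_lt h

theorem LL_nodup : LL.Nodup := List.Nodup.of_map _ keys_nodup

def LF : Finset (ℕ × List ℕ) := LL.toFinset

theorem mem_LF (p : ℕ × List ℕ) : p ∈ LF ↔ p ∈ LL := List.mem_toFinset

theorem LF_card : LF.card = 891 := by
  rw [LF, List.toFinset_card_of_nodup LL_nodup, length_ok]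

theorem vecN_inj {l l' : List ℕ} (h : l.length = 24) (h' : l'.length = 24) (e : vecN l = vecN l') :
    l = l' := by
  refine List.ext_getElem (by omega) fun i hi hi' => ?_
  have := congrFun e ⟨i, by omega⟩
  simp only [vecN] at this
  rw [List.getD_eq_getElem _ _ hi, List.getD_eq_getElem _ _ hi'] at this
  omega

theorem vec_injOn : Set.InjOn (fun p : ℕ × List ℕ => vecN p.2) (LF : Set (ℕ × List ℕ)) := by
  intro p hp q hq e
  have hp' := (mem_LF p).1 hp
  have hq' := (mem_LF q).1 hq
  have h2 : p.2 = q.2 := vecN_inj (sound p hp').1 (sound q hq').1 e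
  exact List.inj_on_of_nodup_map keys_nodup hp' hq' (congrArg skey h2)

/-- `T_AB` as a finite set -/
noncomputable def TF : Finset (Fin 24 → ℤ) := LF.image fun p => vecN p.2

theorem mem_TF (T : Fin 24 → ℤ) : T ∈ TF ↔ T ∈ TAB := by
  simp only [TF, Finset.mem_image, mem_LF]
  constructor
  · rintro ⟨p, hp, rfl⟩
    exact (sound p hp).2
  · intro h
    exact complete h

theorem TF_card : TF.card = 891 := by
  rw [TF, Finset.card_image_of_injOn vec_injOn, LF_card]

theorem TF_sum (f : (Fin 24 → ℤ) → ℤ) : ∑ T ∈ TF, f T = ∑ p ∈ LF, f (vecN p.2) := by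
  rw [TF, Finset.sum_image vec_injOn]

/-- shifted coordinates with an extra `1` in front -/
def hat (p : ℕ × List ℕ) (i : ℕ) : ℕ := (1 :: p.2).getD i 0

theorem hat_le (p : ℕ × List ℕ) (hp : p ∈ LF) (i : ℕ) : hat p i ≤ 9 := by
  cases i with
  | zero => simp [hat]
  | succ i =>
    have hs := sound p ((mem_LF p).1 hp)
    simp only [hat, List.getD_cons_succ]
    by_cases hi : i < 24
    · have h2 := ((mem_TAB _).1 hs.2).2.1
      have h3 : vecN p.2 ⟨i, hi⟩ * vecN p.2 ⟨i, hi⟩ ≤ dotZ (vecN p.2) (vecN p.2) :=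
        Finset.single_le_sum (f := fun i => vecN p.2 i * vecN p.2 i)
          (fun j _ => mul_self_nonneg _) (Finset.mem_univ _)
      rw [h2] at h3
      simp only [vecN] at h3
      by_contra hc
      have : (10 : ℤ) ≤ (p.2.getD i 0 : ℕ) := by exact_mod_cast (by omega : 10 ≤ p.2.getD i 0)
      nlinarith
    · rw [List.getD_eq_default _ _ (by omega)]; omega

theorem moment_hat (i j : ℕ) (hi : i < 25) (hj : j < 25) :
    ∑ p ∈ LF, hat p i * hat p j = Mh i j := by
  have hbig := moment_ok
  generalize hB : 131072 = B at hbig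
  have hh : ∀ p ∈ LF, ∀ b : ℕ, horner b (1 :: p.2) = ∑ i ∈ Finset.range 25, hat p i * b ^ i := by
    intro p hp b
    rw [horner_eq, List.length_cons, (sound p ((mem_LF p).1 hp)).1]
    rfl
  rw [lsum_eq_sum, ← List.sum_toFinset _ LL_nodup] at hbig
  have hr : ∀ (f : ℕ → ℕ) (b : ℕ), horner b ((List.range 25).map f) =
      ∑ i ∈ Finset.range 25, f i * b ^ i := by
    intro f b
    rw [horner_eq, List.length_map, List.length_range]
    refine Finset.sum_congr rfl fun i hi => ?_
    rw [List.getD_eq_getElem _ _ (by simpa using hi)]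
    simp
  rw [hr] at hbig
  simp only [hr] at hbig
  have hl : ∑ p ∈ LL.toFinset, Nat.mul (horner B (1 :: p.2)) (horner (B ^ 25) (1 :: p.2)) =
      ∑ i ∈ Finset.range 25, (∑ j ∈ Finset.range 25, (∑ p ∈ LF, hat p i * hat p j) * B ^ j) *
        (B ^ 25) ^ i := by
    have : ∀ p ∈ LF, Nat.mul (horner B (1 :: p.2)) (horner (B ^ 25) (1 :: p.2)) =
        ∑ i ∈ Finset.range 25, ∑ j ∈ Finset.range 25, hat p i * hat p j * B ^ j * (B ^ 25) ^ i := by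
      intro p hp
      rw [hh p hp, hh p hp, Nat.mul_eq, mul_comm, Finset.sum_mul_sum]
      refine Finset.sum_congr rfl fun i _ => Finset.sum_congr rfl fun j _ => by ring
    rw [← LF, Finset.sum_congr rfl this, Finset.sum_comm]
    refine Finset.sum_congr rfl fun i _ => ?_
    rw [Finset.sum_comm, Finset.sum_mul]
    refine Finset.sum_congr rfl fun j _ => ?_
    rw [Finset.sum_mul, Finset.sum_mul]
  rw [hl] at hbig
  have b1 : ∀ i j, ∑ p ∈ LF, hat p i * hat p j < B := by
    intro i j
    have : ∑ p ∈ LF, hat p i * hat p j ≤ ∑ p ∈ LF, 81 :=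
      Finset.sum_le_sum fun p hp => Nat.mul_le_mul (hat_le p hp i) (hat_le p hp j)
    rw [Finset.sum_const, LF_card] at this
    simp only [smul_eq_mul] at this
    omega
  have b2 : ∀ i < 25, ∀ j < 25, Mh i j < B := by
    rw [← hB]
    decide +kernel
  have h1 := digits_unique (B ^ 25) 25 _ _ (fun i _ => digits_lt B 25 _ fun j _ => b1 i j)
    (fun i hi => digits_lt B 25 _ fun j hj => b2 i hi j hj) hbig i hi
  exact digits_unique B 25 _ _ (fun j _ => b1 i j) (fun j hj => b2 i hi j hj) h1 j hj

theorem Mh_cast : ∀ i < 24, (Mh 0 (i + 1) : ℤ) = Sx i + 3564 ∧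
    ∀ j < 24, (Mh (i + 1) (j + 1) : ℤ) = Mx i j + 4 * Sx i + 4 * Sx j + 14256 := by
  decide +kernel

theorem vecN_hat (p : ℕ × List ℕ) (i : Fin 24) : vecN p.2 i = (hat p (i.val + 1) : ℤ) - 4 := rfl

theorem first_moment (i : Fin 24) : ∑ T ∈ TF, T i = Sx i.val := by
  have h := moment_hat 0 (i.val + 1) (by omega) (by omega)
  have h' : ∑ p ∈ LF, (hat p (i.val + 1) : ℤ) = Sx i.val + 3564 := by
    rw [← (Mh_cast i.val i.isLt).1, ← h]
    push_cast
    exact Finset.sum_congr rfl fun p _ => by simp [hat]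
  rw [TF_sum]
  simp only [vecN_hat, Finset.sum_sub_distrib, h', Finset.sum_const, LF_card]
  norm_num

theorem second_moment (i j : Fin 24) : ∑ T ∈ TF, T i * T j = Mx i.val j.val := by
  have h := moment_hat (i.val + 1) (j.val + 1) (by omega) (by omega)
  have h' : ∑ p ∈ LF, (hat p (i.val + 1) : ℤ) * (hat p (j.val + 1) : ℤ) =
      Mx i j + 4 * Sx i + 4 * Sx j + 14256 := by
    rw [← (Mh_cast i.val i.isLt).2 j.val j.isLt, ← h]
    push_cast
    rfl
  have hi := first_moment i
  have hj := first_moment j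
  rw [TF_sum] at hi hj ⊢
  have e : ∀ p ∈ LF, vecN p.2 i * vecN p.2 j = (hat p (i.val + 1) : ℤ) * (hat p (j.val + 1) : ℤ)
      - 4 * vecN p.2 i - 4 * vecN p.2 j - 16 := by
    intro p _
    rw [vecN_hat, vecN_hat]; ring
  rw [Finset.sum_congr rfl e]
  simp only [Finset.sum_sub_distrib, ← Finset.mul_sum, h', hi, hj, Finset.sum_const, LF_card]
  norm_num
  ring

/-! ### Counting -/

theorem sum_dot : ∑ T ∈ TF, ∑ U ∈ TF, dotZ T U = 8468064 := by
  have : ∑ T ∈ TF, ∑ U ∈ TF, dotZ T U = ∑ i : Fin 24, Sx i.val * Sx i.val := by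
    simp only [dotZ]
    have e : ∀ T ∈ TF, ∑ U ∈ TF, ∑ i, T i * U i = ∑ i : Fin 24, T i * Sx i.val := by
      intro T _
      rw [Finset.sum_comm]
      exact Finset.sum_congr rfl fun i _ => by rw [← Finset.mul_sum, first_moment]
    rw [Finset.sum_congr rfl e, Finset.sum_comm]
    exact Finset.sum_congr rfl fun i _ => by rw [← Finset.sum_mul, first_moment]
  rw [this]
  decide +kernel

theorem sum_dot_sq : ∑ T ∈ TF, ∑ U ∈ TF, dotZ T U * dotZ T U = 106748928 := by
  have : ∑ T ∈ TF, ∑ U ∈ TF, dotZ T U * dotZ T U =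
      ∑ i : Fin 24, ∑ j : Fin 24, Mx i.val j.val * Mx i.val j.val := by
    have e : ∀ T ∈ TF, ∑ U ∈ TF, dotZ T U * dotZ T U =
        ∑ i : Fin 24, ∑ j : Fin 24, T i * T j * Mx i.val j.val := by
      intro T _
      have e1 : ∀ U ∈ TF, dotZ T U * dotZ T U = ∑ i : Fin 24, ∑ j : Fin 24, T i * T j * (U i * U j) := by
        intro U _
        rw [dotZ, Finset.sum_mul_sum]
        exact Finset.sum_congr rfl fun i _ => Finset.sum_congr rfl fun j _ => by ring
      rw [Finset.sum_congr rfl e1, Finset.sum_comm]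
      refine Finset.sum_congr rfl fun i _ => ?_
      rw [Finset.sum_comm]
      exact Finset.sum_congr rfl fun j _ => by rw [← Finset.mul_sum, second_moment]
    rw [Finset.sum_congr rfl e, Finset.sum_comm]
    refine Finset.sum_congr rfl fun i _ => ?_
    rw [Finset.sum_comm]
    exact Finset.sum_congr rfl fun j _ => by rw [← Finset.sum_mul, second_moment]
  rw [this]
  decide +kernel

theorem S0_eq : S0 = (((TF ×ˢ TF).filter fun p => dotZ p.1 p.2 = 0 :
    Finset ((Fin 24 → ℤ) × (Fin 24 → ℤ))) : Set ((Fin 24 → ℤ) × (Fin 24 → ℤ))) := by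
  ext p
  simp only [S0, Set.mem_ofPred_eq, Finset.coe_filter, Finset.mem_product, mem_TF, leechInner_eq]
  rw [and_assoc, div_eq_zero_iff]
  norm_num

theorem S0_card : Nat.card ↥S0 = 891 * 42 := by
  rw [S0_eq, Nat.card_coe_set_eq, Set.ncard_coe_finset]
  set N := ((TF ×ˢ TF).filter fun p => dotZ p.1 p.2 = 0).card with hN
  have hNs : (N : ℤ) = ∑ T ∈ TF, ∑ U ∈ TF, if dotZ T U = 0 then (1 : ℤ) else 0 := by
    rw [hN, Finset.card_filter, Finset.sum_product]
    push_cast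
    rfl
  have e : ∀ T ∈ TF, ∀ U ∈ TF, dotZ T U * dotZ T U - 24 * dotZ T U + 128 =
      128 * (if dotZ T U = 0 then (1 : ℤ) else 0) + if T = U then 384 else 0 := by
    intro T hT U hU
    by_cases h : T = U
    · subst h
      have := ((mem_TAB _).1 ((mem_TF _).1 hT)).2.1
      rw [this]; norm_num
    · rcases TAB_dot ((mem_TF _).1 hT) ((mem_TF _).1 hU) with h' | h' | h' | h'
      · exact absurd h' h
      all_goals simp [h', h]
  have e2 : ∑ T ∈ TF, ∑ U ∈ TF, (dotZ T U * dotZ T U - 24 * dotZ T U + 128) =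
      ∑ T ∈ TF, ∑ U ∈ TF, (128 * (if dotZ T U = 0 then (1 : ℤ) else 0) + if T = U then 384 else 0) :=
    Finset.sum_congr rfl fun T hT => Finset.sum_congr rfl fun U hU => e T hT U hU
  have e3 : ∑ T ∈ TF, ∑ U ∈ TF, (if T = U then (384 : ℤ) else 0) = 891 * 384 := by
    have : ∀ T ∈ TF, ∑ U ∈ TF, (if T = U then (384 : ℤ) else 0) = 384 := by
      intro T hT
      rw [Finset.sum_ite_eq, if_pos hT]
    rw [Finset.sum_congr rfl this, Finset.sum_const, TF_card]
    norm_num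
  have e4 : ∑ T ∈ TF, ∑ U ∈ TF, (dotZ T U * dotZ T U - 24 * dotZ T U + 128) =
      106748928 - 24 * 8468064 + 891 * (891 * 128) := by
    rw [← sum_dot, ← sum_dot_sq]
    simp only [Finset.sum_add_distrib, Finset.sum_sub_distrib, Finset.mul_sum, Finset.sum_const, TF_card]
    norm_num
  have e5 : ∑ T ∈ TF, ∑ U ∈ TF,
      (128 * (if dotZ T U = 0 then (1 : ℤ) else 0) + if T = U then 384 else 0) =
      128 * (N : ℤ) + 891 * 384 := by
    rw [hNs, ← e3]
    simp only [Finset.sum_add_distrib, Finset.mul_sum]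
  rw [e4, e5] at e2
  omega

/-! ### Injectivity -/

theorem ratInner_A (w : Fin 24 → ℚ) : ratInner w (toRat vA) = (w 21 - w 23) / 2 := by
  have : ∑ i, w i * toRat vA i = 4 * w 21 - 4 * w 23 := by
    simp only [toRat, vA, Fin.sum_univ_succ, Fin.succ]
    simp
    ring_nf
  rw [ratInner, this]; ring

theorem ratInner_B (w : Fin 24 → ℚ) : ratInner w (toRat vB) = (w 22 - w 23) / 2 := by
  have : ∑ i, w i * toRat vB i = 4 * w 22 - 4 * w 23 := by
    simp only [toRat, vB, Fin.sum_univ_succ, Fin.succ]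
    simp
    ring_nf
  rw [ratInner, this]; ring

theorem s0map_eq {p : (Fin 24 → ℤ) × (Fin 24 → ℤ)} (h1 : p.1 ∈ TAB) (h2 : p.2 ∈ TAB) :
    s0map p = toRat (p.2 - p.1) := by
  obtain ⟨_, _, a1, b1⟩ := (mem_TAB _).1 h1
  obtain ⟨_, _, a2, b2⟩ := (mem_TAB _).1 h2
  have hA : ratInner (toRat (p.2 - p.1)) (toRat vA) = 0 := by
    rw [ratInner_A]
    simp only [toRat, Pi.sub_apply, a1, a2]
    push_cast
    ring
  have hB : ratInner (toRat (p.2 - p.1)) (toRat vB) = 0 := by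
    rw [ratInner_B]
    simp only [toRat, Pi.sub_apply, b1, b2]
    push_cast
    ring
  rw [s0map, prPerp, hA, hB]
  simp

theorem S0_inj : Function.Injective (fun p : ↥S0 => s0map p.val) := by
  rintro ⟨⟨T, T'⟩, hT, hT', h0⟩ ⟨⟨U, U'⟩, hU, hU', h0'⟩ h
  simp only at hT hT' h0 hU hU' h0' h
  rw [s0map_eq hT hT', s0map_eq hU hU'] at h
  have h : T' - T = U' - U := by
    funext i
    have := congrFun h i
    simp only [toRat] at this
    exact_mod_cast this
  have d0 : dotZ U U' = 0 := by
    rw [leechInner_eq, div_eq_zero_iff] at h0'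
    norm_num at h0'
    exact_mod_cast h0'
  have hd := congrArg (fun v => dotZ v U') h
  simp only [dotZ_sub_left, d0] at hd
  have hUU := ((mem_TAB _).1 hU').2.1
  have e1 : T' = U' := by
    rcases TAB_dot hT' hU' with h' | h' | h' | h'
    · exact h'
    all_goals
      exfalso
      rcases TAB_dot hT hU' with h2 | h2 | h2 | h2
      · rw [h2] at hd; omega
      all_goals omega
  have e2 : T = U := by
    rw [e1] at h
    exact sub_right_injective h
  subst e1 e2
  rfl

/-! ### Span -/

theorem vec4_mem (i : Fin 24) (hi : i.val < 21) (s : ℤ) (hs : s = 4 ∨ s = -4) :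
    (fun j => if j = i then s else if j = 23 then -4 else 0 : Fin 24 → ℤ) ∈ TAB := by
  have n1 : (21 : Fin 24) ≠ i := by rintro rfl; simp at hi
  have n2 : (22 : Fin 24) ≠ i := by rintro rfl; simp at hi
  have n3 : (23 : Fin 24) ≠ i := by rintro rfl; simp at hi
  have hsum : ∀ a b : ℤ, ∑ j : Fin 24, (if j = i then a else if j = 23 then b else 0) = a + b := by
    intro a b
    have : ∀ j : Fin 24, (if j = i then a else if j = 23 then b else 0) =
        (if j = i then a else 0) + if j = 23 then b else 0 := by
      intro j
      by_cases h : j = i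
      · subst h; simp [n3.symm]
      · simp [h]
    simp [this, Finset.sum_add_distrib]
  rw [mem_TAB]
  refine ⟨(isLeech_iff _).2 ⟨0, 0, fun j => if j = i then s / 4 else if j = 23 then -1 else 0, ?_, ?_, ?_⟩,
    ?_, ?_, ?_⟩
  · intro j
    dsimp only [Pi.zero_apply]
    split_ifs <;> omega
  · have e : (fun i => (((0 : Fin 24 → ℤ) i : ℤ) : ZMod 2)) = 0 := by funext i; simp
    rw [e]
    exact GolayCode.zero_mem
  · rw [hsum]; omega
  · have : dotZ (fun j => if j = i then s else if j = 23 then -4 else 0)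
        (fun j => if j = i then s else if j = 23 then -4 else 0) =
        ∑ j : Fin 24, (if j = i then s * s else if j = 23 then 16 else 0) := by
      refine Finset.sum_congr rfl fun j _ => ?_
      dsimp only
      split_ifs <;> norm_num
    rw [this, hsum]
    rcases hs with rfl | rfl <;> norm_num
  · simp [n1, n3]
  · simp [n2, n3]

theorem vec0_mem : (fun j => if j = 21 ∨ j = 22 then 4 else 0 : Fin 24 → ℤ) ∈ TAB := by
  rw [mem_TAB]
  refine ⟨(isLeech_iff _).2 ⟨0, 0, fun j => if j = 21 ∨ j = 22 then 1 else 0, ?_, ?_, ?_⟩,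
    ?_, ?_, ?_⟩
  · intro j
    dsimp only [Pi.zero_apply]
    split_ifs <;> omega
  · have e : (fun i => (((0 : Fin 24 → ℤ) i : ℤ) : ZMod 2)) = 0 := by funext i; simp
    rw [e]
    exact GolayCode.zero_mem
  · decide
  · decide
  · decide
  · decide

/-- the vector `(0²¹,1,1,1)` -/
def tvec : Fin 24 → ℚ := fun j => if 21 ≤ j.val then 1 else 0

theorem gen_mem (i : Fin 24) (hi : i.val < 21) (s : ℤ) (hs : s = 4 ∨ s = -4) :
    (s : ℚ) • (Pi.single i 1 : Fin 24 → ℚ) - (4 : ℚ) • tvec ∈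
      Submodule.span ℚ {w | ∃ p ∈ S0, w = s0map p} := by
  refine Submodule.subset_span ⟨((fun j => if j = 21 ∨ j = 22 then 4 else 0 : Fin 24 → ℤ),
    (fun j => if j = i then s else if j = 23 then -4 else 0 : Fin 24 → ℤ)), ⟨vec0_mem, vec4_mem i hi s hs, ?_⟩, ?_⟩
  · rw [leechInner_eq]
    have : dotZ (fun j => if j = 21 ∨ j = 22 then 4 else 0 : Fin 24 → ℤ)
        (fun j => if j = i then s else if j = 23 then -4 else 0) = 0 := by
      refine Finset.sum_eq_zero fun j _ => ?_
      dsimp only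
      split_ifs <;> first | omega | simp
    rw [this]; simp
  · rw [s0map_eq vec0_mem (vec4_mem i hi s hs)]
    funext j
    simp only [toRat, Pi.sub_apply, Pi.smul_apply, tvec, smul_eq_mul, Pi.single_apply]
    by_cases h : j = i
    · subst h
      have : ¬ (j = 21 ∨ j = 22) := by omega
      have h2 : ¬ (21 ≤ j.val) := by omega
      simp [this, h2]
    · by_cases h1 : 21 ≤ j.val
      · by_cases h3 : j = 23
        · subst h3
          simp [h]
        · have : j = 21 ∨ j = 22 := by omega
          simp [h, h1, h3, this]
      · have h3 : ¬ j = 23 := by omega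
        have : ¬ (j = 21 ∨ j = 22) := by omega
        simp [h, h1, h3, this]

theorem S0_span : (Submodule.span ℚ {w | ∃ p ∈ S0, w = s0map p} : Set (Fin 24 → ℚ))
      = {w | ratInner w (toRat vA) = 0 ∧ ratInner w (toRat vB) = 0} := by
  ext w
  simp only [SetLike.mem_coe, Set.mem_ofPred_eq, ratInner_A, ratInner_B]
  constructor
  · intro h
    induction h using Submodule.span_induction with
    | mem x hx =>
      obtain ⟨p, ⟨h1, h2, _⟩, rfl⟩ := hx
      rw [s0map_eq h1 h2]
      obtain ⟨_, _, a1, b1⟩ := (mem_TAB _).1 h1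
      obtain ⟨_, _, a2, b2⟩ := (mem_TAB _).1 h2
      simp only [toRat, Pi.sub_apply, a1, a2, b1, b2]
      push_cast
      constructor <;> ring
    | zero => simp
    | add x y _ _ hx hy =>
      simp only [Pi.add_apply]
      constructor <;> linarith [hx.1, hx.2, hy.1, hy.2]
    | smul a x _ hx =>
      simp only [Pi.smul_apply, smul_eq_mul]
      constructor
      · linear_combination a * hx.1
      · linear_combination a * hx.2
  · rintro ⟨h1, h2⟩
    have ht : tvec ∈ Submodule.span ℚ {w | ∃ p ∈ S0, w = s0map p} := by
      have := Submodule.smul_mem _ (-1 / 8 : ℚ) (Submodule.add_mem _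
        (gen_mem 0 (by decide) 4 (Or.inl rfl)) (gen_mem 0 (by decide) (-4) (Or.inr rfl)))
      convert this using 1
      push_cast
      module
    have he : ∀ i : Fin 24, i.val < 21 → (Pi.single i 1 : Fin 24 → ℚ) ∈
        Submodule.span ℚ {w | ∃ p ∈ S0, w = s0map p} := by
      intro i hi
      have := Submodule.smul_mem _ (1 / 4 : ℚ) (Submodule.add_mem _
        (gen_mem i hi 4 (Or.inl rfl)) (Submodule.smul_mem _ (4 : ℚ) ht))
      convert this using 1
      push_cast
      module
    have hw : w = ∑ i : Fin 24, (if i.val < 21 then w i • (Pi.single i 1 : Fin 24 → ℚ) else 0)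
        + w 23 • tvec := by
      funext j
      have : (∑ i : Fin 24, (if i.val < 21 then w i • (Pi.single i 1 : Fin 24 → ℚ) else 0)) j =
          if j.val < 21 then w j else 0 := by
        rw [Finset.sum_apply, Finset.sum_eq_single j]
        · split_ifs <;> simp
        · intro i _ hij
          split_ifs <;> simp [hij.symm]
        · simp
      rw [Pi.add_apply, this]
      simp only [Pi.smul_apply, tvec, smul_eq_mul]
      by_cases h : j.val < 21
      · simp [h, show ¬ 21 ≤ j.val by omega]
      · have hj : j = 21 ∨ j = 22 ∨ j = 23 := by omega
        rw [if_neg h, if_pos (by omega)]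
        rcases hj with rfl | rfl | rfl <;> linarith
    rw [hw]
    refine Submodule.add_mem _ (Submodule.sum_mem _ fun i _ => ?_) (Submodule.smul_mem _ _ ht)
    split_ifs with h
    · exact Submodule.smul_mem _ _ (he i h)
    · exact Submodule.zero_mem _

/-- `|S₀| = 891·42`, the map `s₀` is injective on `S₀`, and its
image spans `R_AB^⊥ ⊗ ℚ`. -/
theorem S0_card_inj_span :
    Nat.card ↥S0 = 891 * 42 ∧
    Function.Injective (fun p : ↥S0 => s0map p.val) ∧
    (Submodule.span ℚ {w | ∃ p ∈ S0, w = s0map p} : Set (Fin 24 → ℚ))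
      = {w | ratInner w (toRat vA) = 0 ∧ ratInner w (toRat vB) = 0} :=
  ⟨S0_card, S0_inj, S0_span⟩
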